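/- arXiv:2511.17734 — 2 statements merged into one kernel-verified Lean document; each statement's English description precedes it below -/
import Mathlib

section
/- Let η = (η^1, …, η^k) be a smooth ℝ^k-valued differential one-form on an open set U ⊆ ℝ^m with Reeb vector fields R_1, …, R_k, and let X_1, X_2 be η-Hamiltonian vector fields with η-Hamiltonian k-functions h_1 and h_2. If moreover R_βh_1^α = 0 and R_βh_2^α = 0 on U for all α, β ∈ {1,…,k}, then for each α and all x ∈ U: η^α_x([X_1, X_2](x)) = dη^α_x(X_1(x), X_2(x)). (This relates the k-contact bracket of first integrals of the Reeb vector fields to the presymplectic forms dη^α.) -/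
/-- Lie bracket of vector fields: `[X, Y](x) = DY(x)(X(x)) − DX(x)(Y(x))`. -/
noncomputable def lieBr {E : Type*} [NormedAddCommGroup E] [NormedSpace ℝ E]
    (X Y : E → E) : E → E :=
  fun x => fderiv ℝ Y x (X x) - fderiv ℝ X x (Y x)

/-- Exterior derivative of a one-form: `dθ_x(u, v) = Dθ(x)(u)(v) − Dθ(x)(v)(u)`. -/
noncomputable def extD {E : Type*} [NormedAddCommGroup E] [NormedSpace ℝ E]
    (θ : E → (E →L[ℝ] ℝ)) (x u v : E) : ℝ :=
  fderiv ℝ θ x u v - fderiv ℝ θ x v u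

/-!
Let `R` be any family of vector fields and compute `η^α([X₁, X₂])` before assuming `R_β h^α = 0`.
In `dη^α(X₁, X₂) = X₁(η^α(X₂)) - X₂(η^α(X₁)) - η^α([X₁, X₂])` the Hamiltonian equations turn
`X₁(η^α(X₂))` and `-X₂(η^α(X₁))` each into `dη^α(X₁, X₂)` plus a combination of the `R_β h^α`.
Hence `η^α([X₁, X₂]) = dη^α(X₁, X₂) + ∑ β, (h₁^β R_β h₂^α - h₂^β R_β h₁^α)`, and the sum vanishes
when `h₁` and `h₂` are constant along `R`.
-/

open Filter Topology

section OneForm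

variable {E : Type*} [NormedAddCommGroup E] [NormedSpace ℝ E]
  {θ : E → (E →L[ℝ] ℝ)} {X Y : E → E} {x : E}

theorem extD_swap (u v : E) : extD θ x u v = -extD θ x v u :=
  (neg_sub _ _).symm

theorem extD_apply_vectorField (hθ : DifferentiableAt ℝ θ x) (hX : DifferentiableAt ℝ X x)
    (hY : DifferentiableAt ℝ Y x) :
    extD θ x (X x) (Y x) =
      fderiv ℝ (fun y => θ y (Y y)) x (X x) - fderiv ℝ (fun y => θ y (X y)) x (Y x) -
        θ x (lieBr X Y x) := by
  have fderiv_pairing {Z : E → E} (hZ : DifferentiableAt ℝ Z x) (v : E) :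
      fderiv ℝ (fun y => θ y (Z y)) x v = θ x (fderiv ℝ Z x v) + fderiv ℝ θ x v (Z x) := by
    simp [fderiv_clm_apply hθ hZ]
  rw [fderiv_pairing hX, fderiv_pairing hY, lieBr, extD, map_sub]
  ring

end OneForm

section Hamiltonian

variable {E : Type*} [NormedAddCommGroup E] [NormedSpace ℝ E] {ι : Type*} [Fintype ι]
  {η : ι → E → (E →L[ℝ] ℝ)} {R : ι → E → E} {U : Set E} {x : E}

/-- `X` is an `η`-Hamiltonian vector field on `U` with `η`-Hamiltonian function `h`: for each `α`,
`ι_X η^α = -h^α` and `ι_X dη^α = dh^α - ∑ β, (R_β h^α) η^β`. In `k`-contact geometry `R` is the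
family of Reeb vector fields of `η`; here it is a parameter. -/
def IsHamiltonianOn (η : ι → E → (E →L[ℝ] ℝ)) (R : ι → E → E) (X : E → E) (h : ι → E → ℝ)
    (U : Set E) : Prop :=
  ∀ x ∈ U, ∀ α, η α x (X x) = -(h α x) ∧
    ∀ v, extD (η α) x (X x) v =
      fderiv ℝ (h α) x v - ∑ β, fderiv ℝ (h α) x (R β x) * η β x v

theorem IsHamiltonianOn.fderiv_pairing {X : E → E} {h : ι → E → ℝ}
    (hX : IsHamiltonianOn η R X h U) (hU : U ∈ 𝓝 x) (α : ι) (v : E) :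
    fderiv ℝ (fun y => η α y (X y)) x v =
      -extD (η α) x (X x) v - ∑ β, fderiv ℝ (h α) x (R β x) * η β x v := by
  have pairing_eq : (fun y => η α y (X y)) =ᶠ[𝓝 x] fun y => -(h α y) :=
    eventually_of_mem hU fun y hy => (hX y hy α).1
  rw [pairing_eq.fderiv_eq, fderiv_fun_neg, neg_apply, (hX x (mem_of_mem_nhds hU) α).2 v]
  ring

theorem stmt_9_general {X₁ X₂ : E → E} {h₁ h₂ : ι → E → ℝ} {α : ι} (hU : U ∈ 𝓝 x)
    (hη : DifferentiableAt ℝ (η α) x)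
    (hX₁ : DifferentiableAt ℝ X₁ x) (hX₂ : DifferentiableAt ℝ X₂ x)
    (hHam₁ : IsHamiltonianOn η R X₁ h₁ U) (hHam₂ : IsHamiltonianOn η R X₂ h₂ U) :
    η α x (lieBr X₁ X₂ x) =
      extD (η α) x (X₁ x) (X₂ x) +
        ∑ β, (h₁ β x * fderiv ℝ (h₂ α) x (R β x) - h₂ β x * fderiv ℝ (h₁ α) x (R β x)) := by
  have hx : x ∈ U := mem_of_mem_nhds hU
  have derivative_along_X₁ : fderiv ℝ (fun y => η α y (X₂ y)) x (X₁ x) =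
      extD (η α) x (X₁ x) (X₂ x) + ∑ β, h₁ β x * fderiv ℝ (h₂ α) x (R β x) := by
    simp [hHam₂.fderiv_pairing hU, extD_swap (X₂ x), (hHam₁ x hx _).1, mul_comm]
  have derivative_along_X₂ : fderiv ℝ (fun y => η α y (X₁ y)) x (X₂ x) =
      -extD (η α) x (X₁ x) (X₂ x) + ∑ β, h₂ β x * fderiv ℝ (h₁ α) x (R β x) := by
    simp [hHam₁.fderiv_pairing hU, (hHam₂ x hx _).1, mul_comm]
  rw [Finset.sum_sub_distrib]
  linarith [extD_apply_vectorField hη hX₁ hX₂]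

end Hamiltonian

/-- **`{h_1, h_2}_η = dη(X_1, X_2)` for first integrals of the Reeb vector fields.**
If `X_1, X_2` are `η`-Hamiltonian vector fields with `η`-Hamiltonian k-functions
`h_1, h_2` relative to a smooth `ℝ^k`-valued one-form `η` on an open `U ⊆ ℝ^m` with
Reeb vector fields `R_1, …, R_k`, and `R_βh_1^α = R_βh_2^α = 0` on `U` for all
`α, β`, then `η^α([X_1, X_2])(x) = dη^α(X_1, X_2)(x)` for each `α` and `x ∈ U`. -/
theorem stmt_9 (m k : ℕ) (U : Set (Fin m → ℝ)) (hU : IsOpen U)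
    (η : Fin k → (Fin m → ℝ) → ((Fin m → ℝ) →L[ℝ] ℝ))
    (hη : ∀ α, ContDiffOn ℝ (⊤ : ℕ∞) (η α) U)
    (R : Fin k → (Fin m → ℝ) → (Fin m → ℝ))
    (hRs : ∀ α, ContDiffOn ℝ (⊤ : ℕ∞) (R α) U)
    (hReeb : ∀ x ∈ U, ∀ α β : Fin k,
      η β x (R α x) = (if α = β then (1 : ℝ) else 0) ∧
      ∀ v, extD (η β) x (R α x) v = 0)
    (X₁ X₂ : (Fin m → ℝ) → (Fin m → ℝ))
    (hX₁ : ContDiffOn ℝ (⊤ : ℕ∞) X₁ U) (hX₂ : ContDiffOn ℝ (⊤ : ℕ∞) X₂ U)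
    (h₁ h₂ : Fin k → (Fin m → ℝ) → ℝ)
    (hh₁s : ∀ α, ContDiffOn ℝ (⊤ : ℕ∞) (h₁ α) U)
    (hh₂s : ∀ α, ContDiffOn ℝ (⊤ : ℕ∞) (h₂ α) U)
    (hHam₁ : ∀ x ∈ U, ∀ α : Fin k,
      η α x (X₁ x) = -(h₁ α x) ∧
      ∀ v, extD (η α) x (X₁ x) v =
        fderiv ℝ (h₁ α) x v - ∑ β, fderiv ℝ (h₁ α) x (R β x) * η β x v)
    (hHam₂ : ∀ x ∈ U, ∀ α : Fin k,
      η α x (X₂ x) = -(h₂ α x) ∧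
      ∀ v, extD (η α) x (X₂ x) v =
        fderiv ℝ (h₂ α) x v - ∑ β, fderiv ℝ (h₂ α) x (R β x) * η β x v)
    (hFI₁ : ∀ x ∈ U, ∀ α β : Fin k, fderiv ℝ (h₁ α) x (R β x) = 0)
    (hFI₂ : ∀ x ∈ U, ∀ α β : Fin k, fderiv ℝ (h₂ α) x (R β x) = 0) :
    ∀ α : Fin k, ∀ x ∈ U,
      η α x (lieBr X₁ X₂ x) = extD (η α) x (X₁ x) (X₂ x) := by
  intro α x hx
  have hUx : U ∈ 𝓝 x := hU.mem_nhds hx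
  simpa [hFI₁ x hx, hFI₂ x hx] using stmt_9_general hUx
    (((hη α).contDiffAt hUx).differentiableAt (by simp))
    ((hX₁.contDiffAt hUx).differentiableAt (by simp))
    ((hX₂.contDiffAt hUx).differentiableAt (by simp)) hHam₁ hHam₂
end

section
/- On ℝ^5 with coordinates (x_1, x_2, x_3, x_4, x_5), consider the ℝ²-valued one-form η_c = Υ^4 ⊗ e_1 + Υ^5 ⊗ e_2 with Υ^4 = −2x_3 dx_1 + dx_4 and Υ^5 = −x_2² dx_1 − 2x_3 dx_2 + dx_5. Then η_c is a two-contact form on ℝ^5: for every x, (a) ker(η_c)_x is three-dimensional, spanned by Y_1(x) = (1, 0, x_2, 2x_3, x_2²), Y_2(x) = (0, 1, 0, 0, 2x_3), and Y_3(x) = (0, 0, 1, 0, 0); (b) the joint kernel ker(dη_c)_x := {v : dΥ^4_x(v,·) = 0 and dΥ^5_x(v,·) = 0} equals span{(0,0,0,1,0), (0,0,0,0,1)}; (c) ker(η_c)_x ∩ ker(dη_c)_x = 0. (This is the two-contact form turning the nilpotent control Lie system of Section 8.1 of the paper into a projectable two-contact Lie system.) -/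
/-- `Υ^4 = −2x_3 dx_1 + dx_4` on `ℝ^5` (coordinates `x_1, …, x_5 = x 0, …, x 4`). -/
noncomputable def etaC4 : (Fin 5 → ℝ) → ((Fin 5 → ℝ) →L[ℝ] ℝ) :=
  fun x => (-2 * x 2) • (ContinuousLinearMap.proj 0 : (Fin 5 → ℝ) →L[ℝ] ℝ) +
    (ContinuousLinearMap.proj 3 : (Fin 5 → ℝ) →L[ℝ] ℝ)

/-- `Υ^5 = −x_2² dx_1 − 2x_3 dx_2 + dx_5` on `ℝ^5`. -/
noncomputable def etaC5 : (Fin 5 → ℝ) → ((Fin 5 → ℝ) →L[ℝ] ℝ) :=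
  fun x => (-(x 1 ^ 2)) • (ContinuousLinearMap.proj 0 : (Fin 5 → ℝ) →L[ℝ] ℝ) +
    (-2 * x 2) • (ContinuousLinearMap.proj 1 : (Fin 5 → ℝ) →L[ℝ] ℝ) +
    (ContinuousLinearMap.proj 4 : (Fin 5 → ℝ) →L[ℝ] ℝ)

/-! The contact distribution `ker η_c` projects isomorphically onto the first three coordinates,
with the frame `Y_1, Y_2, Y_3` projecting to the rows of a unitriangular matrix. Since
`dΥ^4 = 2 dx_1 ∧ dx_3` and `dΥ^5 = 2 x_2 dx_1 ∧ dx_2 + 2 dx_2 ∧ dx_3`, a vector lies in the joint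
kernel of the differentials exactly when its first three coordinates vanish, so the two kernels are
complementary. -/

section ExteriorDerivative

variable {E : Type*} [NormedAddCommGroup E] [NormedSpace ℝ E] {θ ω : E → (E →L[ℝ] ℝ)} {x : E}

theorem extD_fun_add (hθ : DifferentiableAt ℝ θ x) (hω : DifferentiableAt ℝ ω x) (u v : E) :
    extD (fun y => θ y + ω y) x u v = extD θ x u v + extD ω x u v := by
  simp only [extD, fderiv_fun_add hθ hω, add_apply]
  ring

theorem extD_add_const (θ : E → (E →L[ℝ] ℝ)) (ℓ : E →L[ℝ] ℝ) (x u v : E) :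
    extD (fun y => θ y + ℓ) x u v = extD θ x u v := by
  simp only [extD, fderiv_add_const]

theorem extD_smul_const {f : E → ℝ} {f' : E →L[ℝ] ℝ} (hf : HasFDerivAt f f' x) (ℓ : E →L[ℝ] ℝ)
    (u v : E) : extD (fun y => f y • ℓ) x u v = f' u * ℓ v - f' v * ℓ u := by
  simp only [extD, (hf.smul_const ℓ).fderiv, ContinuousLinearMap.smulRight_apply,
    smul_apply, smul_eq_mul]

end ExteriorDerivative

theorem linearIndependent_of_det_minor_ne_zero {R m n : Type*} [CommRing R] [IsDomain R]
    [Fintype m] [DecidableEq m] {v : m → n → R} (f : m → n)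
    (hv : (Matrix.of fun i j => v i (f j)).det ≠ 0) : LinearIndependent R v :=
  .of_comp (LinearMap.funLeft R R f) (Matrix.linearIndependent_rows_of_det_ne_zero hv)

theorem mem_span_last_two_iff {R : Type*} [Semiring R] {v : Fin 5 → R} :
    v ∈ Submodule.span R {![0, 0, 0, 1, 0], ![0, 0, 0, 0, 1]} ↔ v 0 = 0 ∧ v 1 = 0 ∧ v 2 = 0 := by
  rw [Submodule.mem_span_pair]
  constructor
  · rintro ⟨a, b, rfl⟩
    simp
  · rintro ⟨h₀, h₁, h₂⟩
    refine ⟨v 3, v 4, ?_⟩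
    ext i
    fin_cases i <;> simp [h₀, h₁, h₂]

section Kernel

/-- The frame `(Y_1, Y_2, Y_3)` of the contact distribution `ker η_c` at `x`, indexed from `0`. -/
def contactFrame (x : Fin 5 → ℝ) : Fin 3 → Fin 5 → ℝ :=
  ![![1, 0, x 1, 2 * x 2, x 1 ^ 2], ![0, 1, 0, 0, 2 * x 2], ![0, 0, 1, 0, 0]]

variable {x v : Fin 5 → ℝ}

theorem range_contactFrame (x : Fin 5 → ℝ) :
    Set.range (contactFrame x) =
      {![1, 0, x 1, 2 * x 2, x 1 ^ 2], ![0, 1, 0, 0, 2 * x 2], ![0, 0, 1, 0, 0]} := by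
  simp only [contactFrame, Matrix.range_cons, Matrix.range_empty, Set.union_empty,
    Set.singleton_union]

theorem linearIndependent_contactFrame (x : Fin 5 → ℝ) : LinearIndependent ℝ (contactFrame x) := by
  apply linearIndependent_of_det_minor_ne_zero ![0, 1, 2]
  simp [Matrix.det_fin_three, contactFrame]

theorem etaC4_eq_zero_iff : etaC4 x v = 0 ↔ v 3 = 2 * x 2 * v 0 := by
  have h_eval : etaC4 x v = -2 * x 2 * v 0 + v 3 := rfl
  grind

theorem etaC5_eq_zero_iff : etaC5 x v = 0 ↔ v 4 = x 1 ^ 2 * v 0 + 2 * x 2 * v 1 := by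
  have h_eval : etaC5 x v = -(x 1 ^ 2) * v 0 + -2 * x 2 * v 1 + v 4 := rfl
  grind

theorem mem_span_contactFrame_iff :
    v ∈ Submodule.span ℝ (Set.range (contactFrame x)) ↔ etaC4 x v = 0 ∧ etaC5 x v = 0 := by
  rw [range_contactFrame, Submodule.mem_span_triple, etaC4_eq_zero_iff, etaC5_eq_zero_iff]
  constructor
  · rintro ⟨a, b, c, rfl⟩
    constructor <;> simp <;> ring
  · rintro ⟨h₃, h₄⟩
    refine ⟨v 0, v 1, v 2 - x 1 * v 0, ?_⟩
    ext i
    fin_cases i <;> simp [h₃, h₄] <;> ring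

end Kernel

section JointKernel

theorem extD_etaC4 (x u v : Fin 5 → ℝ) :
    extD etaC4 x u v = 2 * (u 0 * v 2 - u 2 * v 0) := by
  have hx₂ : HasFDerivAt (fun y => y 2) (ContinuousLinearMap.proj 2 : (Fin 5 → ℝ) →L[ℝ] ℝ) x :=
    hasFDerivAt_apply 2 x
  unfold etaC4
  rw [extD_add_const, extD_smul_const (hx₂.const_mul (-2))]
  simp only [smul_apply, ContinuousLinearMap.proj_apply, smul_eq_mul]
  ring

theorem extD_etaC5 (x u v : Fin 5 → ℝ) :
    extD etaC5 x u v = 2 * x 1 * (u 0 * v 1 - u 1 * v 0) + 2 * (u 1 * v 2 - u 2 * v 1) := by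
  have hx₁ : HasFDerivAt (fun y => y 1) (ContinuousLinearMap.proj 1 : (Fin 5 → ℝ) →L[ℝ] ℝ) x :=
    hasFDerivAt_apply 1 x
  have hx₂ : HasFDerivAt (fun y => y 2) (ContinuousLinearMap.proj 2 : (Fin 5 → ℝ) →L[ℝ] ℝ) x :=
    hasFDerivAt_apply 2 x
  have h_sq := (hx₁.pow 2).fun_neg
  have h_lin := hx₂.const_mul (-2)
  unfold etaC5
  rw [extD_add_const, extD_fun_add (h_sq.smul_const _).differentiableAt
    (h_lin.smul_const _).differentiableAt, extD_smul_const h_sq, extD_smul_const h_lin]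
  simp only [Nat.add_one_sub_one, pow_one, nsmul_eq_mul, Nat.cast_ofNat, neg_apply, smul_apply,
    ContinuousLinearMap.proj_apply, smul_eq_mul]
  ring

variable {x v : Fin 5 → ℝ}

theorem forall_extD_etaC4_eq_zero_iff : (∀ u, extD etaC4 x v u = 0) ↔ v 0 = 0 ∧ v 2 = 0 := by
  simp only [extD_etaC4]
  constructor
  · intro h
    exact ⟨by simpa using h (Pi.single 2 1), by simpa using h (Pi.single 0 1)⟩
  · rintro ⟨h₀, h₂⟩ u
    simp [h₀, h₂]

theorem forall_extD_etaC5_eq_zero_iff :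
    (∀ u, extD etaC5 x v u = 0) ↔ v 1 = 0 ∧ v 2 = x 1 * v 0 := by
  simp only [extD_etaC5]
  constructor
  · intro h
    have h₁ : v 1 = 0 := by simpa using h (Pi.single 2 1)
    have h₂ : 2 * x 1 * v 0 - 2 * v 2 = 0 := by simpa [sub_eq_add_neg] using h (Pi.single 1 1)
    exact ⟨h₁, by linarith⟩
  · rintro ⟨h₁, h₂⟩ u
    rw [h₁, h₂]
    ring

theorem forall_extD_etaC_eq_zero_iff :
    ((∀ u, extD etaC4 x v u = 0) ∧ ∀ u, extD etaC5 x v u = 0) ↔ v 0 = 0 ∧ v 1 = 0 ∧ v 2 = 0 := by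
  rw [forall_extD_etaC4_eq_zero_iff, forall_extD_etaC5_eq_zero_iff]
  grind

theorem eq_zero_of_etaC_eq_zero_of_forall_extD_eq_zero
    (h₄ : etaC4 x v = 0) (h₅ : etaC5 x v = 0)
    (hd₄ : ∀ u, extD etaC4 x v u = 0) (hd₅ : ∀ u, extD etaC5 x v u = 0) : v = 0 := by
  obtain ⟨h₀, h₁, h₂⟩ := forall_extD_etaC_eq_zero_iff.1 ⟨hd₄, hd₅⟩
  rw [etaC4_eq_zero_iff] at h₄
  rw [etaC5_eq_zero_iff] at h₅
  ext i
  fin_cases i <;> simp [h₀, h₁, h₂, h₄, h₅]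

end JointKernel

/-- **The two-contact form of the nilpotent control Lie system.** The ℝ²-valued
one-form `η_c = Υ^4 ⊗ e_1 + Υ^5 ⊗ e_2` with `Υ^4 = −2x_3 dx_1 + dx_4` and
`Υ^5 = −x_2² dx_1 − 2x_3 dx_2 + dx_5` is a two-contact form on `ℝ^5`: at every
point, (a) its kernel is three-dimensional, spanned by
`Y_1 = (1, 0, x_2, 2x_3, x_2²)`, `Y_2 = (0, 1, 0, 0, 2x_3)`, `Y_3 = (0, 0, 1, 0, 0)`;
(b) the joint kernel of `dΥ^4, dΥ^5` is `span{(0,0,0,1,0), (0,0,0,0,1)}`;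
(c) the two kernels intersect trivially. -/
theorem stmt_17 : ∀ x : Fin 5 → ℝ,
    ({v : Fin 5 → ℝ | etaC4 x v = 0 ∧ etaC5 x v = 0} =
      ↑(Submodule.span ℝ
        ({![1, 0, x 1, 2 * x 2, x 1 ^ 2], ![0, 1, 0, 0, 2 * x 2],
          ![0, 0, 1, 0, 0]} : Set (Fin 5 → ℝ)))) ∧
    Module.finrank ℝ
      ↥(Submodule.span ℝ
        ({![1, 0, x 1, 2 * x 2, x 1 ^ 2], ![0, 1, 0, 0, 2 * x 2],
          ![0, 0, 1, 0, 0]} : Set (Fin 5 → ℝ))) = 3 ∧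
    ({v : Fin 5 → ℝ | (∀ u, extD etaC4 x v u = 0) ∧ (∀ u, extD etaC5 x v u = 0)} =
      ↑(Submodule.span ℝ
        ({![0, 0, 0, 1, 0], ![0, 0, 0, 0, 1]} : Set (Fin 5 → ℝ)))) ∧
    (∀ v : Fin 5 → ℝ, etaC4 x v = 0 → etaC5 x v = 0 →
      (∀ u, extD etaC4 x v u = 0) → (∀ u, extD etaC5 x v u = 0) → v = 0) := by
  intro x
  rw [← range_contactFrame x]
  refine ⟨?kernel, ?rank, ?jointKernel, ?trivialIntersection⟩
  case kernel => exact Set.ext fun v => mem_span_contactFrame_iff.symm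
  case rank => exact finrank_span_eq_card (linearIndependent_contactFrame x)
  case jointKernel =>
    exact Set.ext fun v => forall_extD_etaC_eq_zero_iff.trans mem_span_last_two_iff.symm
  case trivialIntersection => exact fun v => eq_zero_of_etaC_eq_zero_of_forall_extD_eq_zero
end
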